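/- The tradeoff function between two product Gaussian measures P = N(0, I_k) and Q = N(v, I_k) on ℝ^k equals G_{‖v‖₂}, i.e., T(N(0, I_k), N(v, I_k))(α) = Φ(Φ^{-1}(1 − α) − ‖v‖₂) for all α ∈ (0,1). -/

import Mathlib

open MeasureTheory ProbabilityTheory Real Set

/-- Standard normal CDF. -/
noncomputable def Phi (x : ℝ) : ℝ := ((gaussianReal 0 1) (Set.Iic x)).toReal

/-- Inverse of the standard normal CDF (on (0,1)). -/
noncomputable def PhiInv (p : ℝ) : ℝ := sInf {x : ℝ | p ≤ Phi x}

/-- Gaussian tradeoff function `G_μ`, extended by `G_μ(0)=1`, `G_μ(1)=0`. -/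
noncomputable def Gmu (μ α : ℝ) : ℝ :=
  if α ≤ 0 then 1 else if 1 ≤ α then 0 else Phi (PhiInv (1 - α) - μ)

/-- Optimal hypothesis-testing tradeoff function: minimal type-II error over
randomized tests with type-I error at most `α`. -/
noncomputable def tradeoff {Ω : Type*} [MeasurableSpace Ω] (P Q : Measure Ω) (α : ℝ) : ℝ :=
  sInf { b : ℝ | ∃ φ : Ω → ℝ, Measurable φ ∧ (∀ ω, φ ω ∈ Set.Icc (0:ℝ) 1) ∧
    (∫ ω, φ ω ∂P) ≤ α ∧ b = 1 - ∫ ω, φ ω ∂Q }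

/-- Rényi divergence of order `a > 1`. -/
noncomputable def renyiDiv {Ω : Type*} [MeasurableSpace Ω] (a : ℝ) (P Q : Measure Ω) : ℝ :=
  (a - 1)⁻¹ * Real.log (∫ ω, ((Measure.rnDeriv P Q ω).toReal) ^ a ∂Q)

/-- `(ε,δ)`-differential privacy. -/
def IsDP {X Ω : Type*} [MeasurableSpace Ω] (M : X → Measure Ω) (Neighbor : X → X → Prop)
    (ε δ : ℝ) : Prop :=
  ∀ x x', Neighbor x x' → ∀ S : Set Ω, MeasurableSet S →
    ((M x) S).toReal ≤ Real.exp ε * ((M x') S).toReal + δ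

/-- `ρ`-zero-concentrated differential privacy. -/
def IsZCDP {X Ω : Type*} [MeasurableSpace Ω] (M : X → Measure Ω) (Neighbor : X → X → Prop)
    (ρ : ℝ) : Prop :=
  ∀ x x', Neighbor x x' → ∀ a : ℝ, 1 < a → renyiDiv a (M x) (M x') ≤ ρ * a

/-- `μ`-Gaussian differential privacy. -/
def IsGDP {X Ω : Type*} [MeasurableSpace Ω] (M : X → Measure Ω) (Neighbor : X → X → Prop)
    (μ : ℝ) : Prop :=
  ∀ x x', Neighbor x x' → ∀ α ∈ Set.Icc (0:ℝ) 1, Gmu μ α ≤ tradeoff (M x) (M x') α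

open Filter Topology in
lemma aux_Phi_cont : Continuous Phi := by
  have h : Phi = fun x => cdf (gaussianReal 0 1) x := by
    funext x; rw [cdf_eq_real]; rfl
  rw [h, continuous_iff_continuousAt]
  intro x
  have hm := monotone_cdf (gaussianReal 0 1)
  rw [hm.continuousAt_iff_leftLim_eq_rightLim, StieltjesFunction.rightLim_eq]
  have h1 := StieltjesFunction.measure_singleton (cdf (gaussianReal 0 1)) x
  rw [measure_cdf] at h1
  haveI := nullSingletonClass_gaussianReal (μ := 0) (v := 1) one_ne_zero
  rw [measure_singleton] at h1
  have h2 := ENNReal.ofReal_eq_zero.1 h1.symm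
  have h3 := hm.leftLim_le (le_refl x)
  linarith

open Filter Topology in
lemma aux_Phi_PhiInv (p : ℝ) (hp : p ∈ Set.Ioo (0:ℝ) 1) : Phi (PhiInv p) = p := by
  have h : ∀ x, Phi x = cdf (gaussianReal 0 1) x := by
    intro x; rw [cdf_eq_real]; rfl
  have hmono : Monotone Phi := by
    intro a b hab; rw [h, h]; exact monotone_cdf _ hab
  have hbot : Tendsto Phi atBot (𝓝 0) := by
    rw [show Phi = _ from funext h]; exact tendsto_cdf_atBot _
  have htop : Tendsto Phi atTop (𝓝 1) := by
    rw [show Phi = _ from funext h]; exact tendsto_cdf_atTop _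
  have hne : {x : ℝ | p ≤ Phi x}.Nonempty := by
    obtain ⟨x, hx⟩ := (htop.eventually (lt_mem_nhds hp.2)).exists
    exact ⟨x, hx.le⟩
  obtain ⟨y, hy⟩ := (hbot.eventually (gt_mem_nhds hp.1)).exists
  have hbdd : BddBelow {x : ℝ | p ≤ Phi x} := by
    refine ⟨y, fun x hx => ?_⟩
    by_contra hlt
    have := hmono (not_le.1 hlt).le
    have hx' : p ≤ Phi x := hx
    linarith
  have hcl : IsClosed {x : ℝ | p ≤ Phi x} := isClosed_le continuous_const aux_Phi_cont
  apply le_antisymm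
  · have ht : Tendsto Phi (𝓝[<] (PhiInv p)) (𝓝 (Phi (PhiInv p))) :=
      aux_Phi_cont.continuousAt.tendsto.mono_left nhdsWithin_le_nhds
    refine le_of_tendsto ht ?_
    filter_upwards [self_mem_nhdsWithin] with z hz
    by_contra hlt
    have : PhiInv p ≤ z := csInf_le hbdd (not_le.1 hlt).le
    exact absurd hz (not_lt.2 this)
  · exact hcl.csInf_mem hne hbdd

lemma aux_oneD (m : ℝ) : gaussianReal m 1 =
    (gaussianReal 0 1).withDensity (fun x => ENNReal.ofReal (Real.exp (m * x - m ^ 2 / 2))) := by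
  rw [gaussianReal_of_var_ne_zero _ one_ne_zero, gaussianReal_of_var_ne_zero _ one_ne_zero,
    ← withDensity_mul _ (measurable_gaussianPDF _ _) (by fun_prop)]
  congr 1
  funext x
  simp only [Pi.mul_apply, gaussianPDF]
  rw [← ENNReal.ofReal_mul (gaussianPDFReal_nonneg _ _ _)]
  congr 1
  simp only [gaussianPDFReal]
  rw [mul_assoc (√(2 * π * _))⁻¹, ← Real.exp_add]
  congr 2
  simp
  ring

lemma aux_int (m : ℝ) :
    Integrable (fun x => Real.exp (m * x - m ^ 2 / 2)) (gaussianReal 0 1) := by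
  simp_rw [Real.exp_sub]
  exact (integrable_exp_mul_gaussianReal m).div_const _

lemma aux_density (k : ℕ) (v : Fin k → ℝ) :
    (Measure.pi fun i : Fin k => gaussianReal (v i) 1) =
    (Measure.pi fun _ : Fin k => gaussianReal 0 1).withDensity
      (fun x => ENNReal.ofReal (∏ i, Real.exp (v i * x i - v i ^ 2 / 2))) := by
  refine Measure.pi_eq fun s hs => ?_
  rw [withDensity_apply _ (MeasurableSet.univ_pi hs), Measure.restrict_pi_pi]
  rw [← ofReal_integral_eq_lintegral_ofReal]
  · rw [integral_fintype_prod_eq_prod (f := fun i x => Real.exp (v i * x - v i ^ 2 / 2)),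
      ENNReal.ofReal_prod_of_nonneg]
    · refine Finset.prod_congr rfl fun i _ => ?_
      rw [aux_oneD (v i), withDensity_apply _ (hs i), ofReal_integral_eq_lintegral_ofReal]
      · exact (aux_int (v i)).restrict
      · exact Filter.Eventually.of_forall fun x => (Real.exp_pos _).le
    · exact fun i _ => integral_nonneg fun x => (Real.exp_pos _).le
  · exact Integrable.fintype_prod (f := fun i x => Real.exp (v i * x - v i ^ 2 / 2))
      fun i => (aux_int (v i)).restrict
  · exact Filter.Eventually.of_forall fun x => Finset.prod_nonneg fun i _ => (Real.exp_pos _).le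

lemma aux_law (k : ℕ) (v m : Fin k → ℝ) :
    (Measure.pi fun i : Fin k => gaussianReal (m i) 1).map (fun x => ∑ i, v i * x i) =
      gaussianReal (∑ i, v i * m i) (∑ i, (v i) ^ 2).toNNReal := by
  have hmeas : Measurable (fun x : Fin k → ℝ => ∑ i, v i * x i) := by fun_prop
  haveI := Measure.isProbabilityMeasure_map (μ := Measure.pi fun i : Fin k => gaussianReal (m i) 1)
    hmeas.aemeasurable
  apply Measure.ext_of_charFun
  funext t
  rw [charFun_gaussianReal, charFun_apply_real, integral_map hmeas.aemeasurable (by fun_prop)]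
  have h1 : ∀ x : Fin k → ℝ, Complex.exp (t * (∑ i, v i * x i : ℝ) * Complex.I) =
      ∏ i, Complex.exp ((t * v i : ℝ) * (x i) * Complex.I) := by
    intro x
    rw [← Complex.exp_sum]
    congr 1
    push_cast
    rw [Finset.mul_sum, Finset.sum_mul]
    exact Finset.sum_congr rfl fun i _ => by ring
  simp_rw [h1]
  rw [integral_fintype_prod_eq_prod
    (f := fun i (x : ℝ) => Complex.exp ((t * v i : ℝ) * (x : ℂ) * Complex.I))]
  simp_rw [← charFun_apply_real, charFun_gaussianReal]
  rw [← Complex.exp_sum]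
  congr 1
  rw [Real.coe_toNNReal _ (Finset.sum_nonneg fun i _ => sq_nonneg _)]
  push_cast
  rw [Finset.sum_sub_distrib, Finset.mul_sum, Finset.sum_mul, Finset.sum_mul, Finset.sum_div]
  congr 1 <;> exact Finset.sum_congr rfl fun i _ => by push_cast; ring

/-- Gaussian law in terms of `Phi`. -/
lemma aux_cdf (a s t : ℝ) (hs : 0 < s) :
    (gaussianReal a (s ^ 2).toNNReal).real (Set.Iic (t * s)) = Phi (t - a / s) := by
  have h : gaussianReal a (s ^ 2).toNNReal =
      (gaussianReal 0 1).map (fun x => s * x + a) := by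
    have h1 : (gaussianReal 0 1).map (fun x => s * x + a) =
        ((gaussianReal 0 1).map (fun x => s * x)).map (fun x => x + a) := by
      rw [Measure.map_map (by fun_prop) (by fun_prop)]; rfl
    rw [h1, gaussianReal_map_const_mul, gaussianReal_map_add_const]
    congr 1
    · simp
    · ext; simp [sq_nonneg]
  rw [h, map_measureReal_apply (by fun_prop) measurableSet_Iic]
  unfold Phi
  rw [← measureReal_def]
  congr 1
  ext x
  simp only [Set.mem_preimage, Set.mem_Iic]
  have e : s * x + a = (x + a / s) * s := by field_simp
  rw [le_sub_iff_add_le, e, mul_le_mul_iff_left₀ hs]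

lemma aux_attain (k : ℕ) (v m : Fin k → ℝ) (s t : ℝ) (hs : 0 < s) (hv : ∑ i, (v i) ^ 2 = s ^ 2) :
    ∫ x, (Set.indicator {x : Fin k → ℝ | t * s < ∑ i, v i * x i} (fun _ => (1:ℝ)) x)
      ∂(Measure.pi fun i : Fin k => gaussianReal (m i) 1) =
      1 - Phi (t - (∑ i, v i * m i) / s) := by
  have hmeas : Measurable (fun x : Fin k → ℝ => ∑ i, v i * x i) := by fun_prop
  rw [← aux_cdf _ s t hs, ← hv, ← aux_law k v m,
    map_measureReal_apply hmeas measurableSet_Iic,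
    ← probReal_compl_eq_one_sub (hmeas measurableSet_Iic)]
  rw [integral_indicator_const _ (measurableSet_lt measurable_const hmeas)]
  simp only [smul_eq_mul, mul_one]
  congr 1
  ext x
  simp

/-- The tradeoff function between the product Gaussians `N(0, I_k)` and
`N(v, I_k)` equals `G_{‖v‖₂}`. -/
theorem tradeoff_product_gaussian (k : ℕ) (v : Fin k → ℝ) :
    ∀ α ∈ Set.Ioo (0:ℝ) 1,
      tradeoff (Measure.pi fun _ : Fin k => gaussianReal 0 1)
               (Measure.pi fun i : Fin k => gaussianReal (v i) 1) α
        = Phi (PhiInv (1 - α) - Real.sqrt (∑ i, (v i) ^ 2)) := by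
  intro α hα
  have hPhi := aux_Phi_PhiInv (1 - α) ⟨by linarith [hα.2], by linarith [hα.1]⟩
  set t := PhiInv (1 - α) with ht
  set s := Real.sqrt (∑ i, (v i) ^ 2) with hsdef
  have hnn : 0 ≤ ∑ i, (v i) ^ 2 := Finset.sum_nonneg fun i _ => sq_nonneg _
  have hv : ∑ i, (v i) ^ 2 = s ^ 2 := (Real.sq_sqrt hnn).symm
  unfold tradeoff
  apply IsLeast.csInf_eq
  rcases (Real.sqrt_nonneg (∑ i, (v i) ^ 2)).eq_or_lt with h0 | hs
  · rw [← hsdef] at h0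
    have hz : ∀ i, v i = 0 := by
      rw [← h0] at hv
      intro i
      have := (Finset.sum_eq_zero_iff_of_nonneg (fun i _ => sq_nonneg (v i))).1
        (by simpa using hv) i (Finset.mem_univ i)
      simpa using this
    simp_rw [hz]
    rw [← h0, sub_zero, hPhi]
    constructor
    · refine ⟨fun _ => α, measurable_const, fun _ => ⟨hα.1.le, hα.2.le⟩, ?_, ?_⟩ <;> simp
    · rintro b ⟨φ, -, -, h1, rfl⟩
      linarith
  · rw [← hsdef] at hs
    have hmeas : Measurable (fun x : Fin k → ℝ => ∑ i, v i * x i) := by fun_prop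
    have hA := measurableSet_lt (measurable_const (a := t * s)) hmeas
    set ψ : (Fin k → ℝ) → ℝ :=
      Set.indicator {x : Fin k → ℝ | t * s < ∑ i, v i * x i} (fun _ => (1:ℝ)) with hψ
    have hψm : Measurable ψ := measurable_const.indicator hA
    have hψ01 : ∀ x, ψ x ∈ Set.Icc (0:ℝ) 1 := by
      intro x
      by_cases hx : x ∈ {x : Fin k → ℝ | t * s < ∑ i, v i * x i} <;> simp [hψ, Set.indicator, hx]
    have hP := aux_attain k v (fun _ => 0) s t hs hv
    have hQ := aux_attain k v v s t hs hv
    simp only [mul_zero, Finset.sum_const_zero, zero_div, sub_zero, hPhi] at hP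
    rw [show (∑ i, v i * v i) / s = s by
      simp_rw [← pow_two]; rw [hv]; field_simp] at hQ
    rw [← hψ] at hP hQ
    constructor
    · refine ⟨ψ, hψm, hψ01, ?_, ?_⟩
      · rw [hP]; linarith
      · rw [hQ]; ring
    · rintro b ⟨φ, hφm, hφ, h1, rfl⟩
      suffices h : ∫ x, φ x ∂(Measure.pi fun i : Fin k => gaussianReal (v i) 1) ≤
          ∫ x, ψ x ∂(Measure.pi fun i : Fin k => gaussianReal (v i) 1) by
        rw [hQ] at h; linarith
      set L : (Fin k → ℝ) → ℝ := fun x => ∏ i, Real.exp (v i * x i - v i ^ 2 / 2) with hL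
      have hLm : Measurable L := by fun_prop
      have hL0 : ∀ x, 0 ≤ L x := fun x => Finset.prod_nonneg fun i _ => (Real.exp_pos _).le
      have hLe : ∀ x, L x = Real.exp (∑ i, v i * x i - s ^ 2 / 2) := by
        intro x
        rw [hL]
        simp only
        rw [← Real.exp_sum, Finset.sum_sub_distrib, ← Finset.sum_div, hv]
      have hLi : Integrable L (Measure.pi fun _ : Fin k => gaussianReal 0 1) :=
        Integrable.fintype_prod (f := fun i x => Real.exp (v i * x - v i ^ 2 / 2))
          fun i => aux_int (v i)
      have hint : ∀ f : (Fin k → ℝ) → ℝ,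
          ∫ x, f x ∂(Measure.pi fun i : Fin k => gaussianReal (v i) 1) =
          ∫ x, L x * f x ∂(Measure.pi fun _ : Fin k => gaussianReal 0 1) := by
        intro f
        rw [aux_density, integral_withDensity_eq_integral_toReal_smul (by fun_prop)
          (Filter.Eventually.of_forall fun x => ENNReal.ofReal_lt_top)]
        refine integral_congr_ae (Filter.Eventually.of_forall fun x => ?_)
        simp only [smul_eq_mul]
        rw [ENNReal.toReal_ofReal (hL0 x)]
      have hbi : ∀ f : (Fin k → ℝ) → ℝ, Measurable f → (∀ x, f x ∈ Set.Icc (0:ℝ) 1) →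
          Integrable f (Measure.pi fun _ : Fin k => gaussianReal 0 1) := by
        intro f hf h01
        refine Integrable.of_bound hf.aestronglyMeasurable 1 (Filter.Eventually.of_forall fun x => ?_)
        rw [Real.norm_eq_abs, abs_of_nonneg (h01 x).1]; exact (h01 x).2
      have hLbi : ∀ f : (Fin k → ℝ) → ℝ, Measurable f → (∀ x, f x ∈ Set.Icc (0:ℝ) 1) →
          Integrable (fun x => L x * f x) (Measure.pi fun _ : Fin k => gaussianReal 0 1) := by
        intro f hf h01
        refine hLi.mul_bdd (c := 1) hf.aestronglyMeasurable (Filter.Eventually.of_forall fun x => ?_)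
        rw [Real.norm_eq_abs, abs_of_nonneg (h01 x).1]; exact (h01 x).2
      set c := Real.exp (t * s - s ^ 2 / 2) with hc
      have hkey : ∀ x, L x * φ x + c * ψ x ≤ L x * ψ x + c * φ x := by
        intro x
        by_cases hx : t * s < ∑ i, v i * x i
        · have hψx : ψ x = 1 := by simp [hψ, Set.indicator, hx]
          have : c ≤ L x := by rw [hLe, hc]; exact Real.exp_le_exp.2 (by linarith)
          rw [hψx]
          nlinarith [(hφ x).2]
        · have hψx : ψ x = 0 := by simp [hψ, Set.indicator, hx]
          have : L x ≤ c := by rw [hLe, hc]; exact Real.exp_le_exp.2 (by linarith)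
          rw [hψx]
          nlinarith [(hφ x).1]
      have hmono := integral_mono ((hLbi φ hφm hφ).add ((hbi ψ hψm hψ01).const_mul c))
        ((hLbi ψ hψm hψ01).add ((hbi φ hφm hφ).const_mul c)) hkey
      simp only [Pi.add_apply] at hmono
      rw [integral_add (hLbi φ hφm hφ) ((hbi ψ hψm hψ01).const_mul c),
        integral_add (hLbi ψ hψm hψ01) ((hbi φ hφm hφ).const_mul c),
        integral_const_mul, integral_const_mul, ← hint, ← hint, hP] at hmono
      have hc0 : 0 < c := Real.exp_pos _
      nlinarith
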